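/- arXiv:2005.09626 — 4 statements merged into one kernel-verified Lean document; each statement's English description precedes it below -/
import Mathlib

section
/- Let Γ ⊆ [0,1] be a set of real numbers satisfying the DCC and let n be a non-negative integer. Then there exists a real number γ > 0 (depending only on Γ and n) such that for every k ∈ ℕ, every family b₁, …, b_k of elements of Γ and every family n₁, …, n_k of non-negative integers, if ∑_{i=1}^k n_i·b_i − n > 0, then ∑_{i=1}^k n_i·b_i − n ≥ γ. -/
/-- A set `S ⊆ ℝ` satisfies the descending chain condition (DCC) if every
nonincreasing sequence of elements of `S` is eventually constant. -/
def SatisfiesDCC (S : Set ℝ) : Prop :=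
  ∀ f : ℕ → ℝ, (∀ n, f n ∈ S) → (∀ n, f (n + 1) ≤ f n) → ∃ N, ∀ n ≥ N, f n = f N

/-!
For a set of nonnegative reals, the DCC passes to the additive submonoid it generates, by Higman's
lemma. The sums `∑ nᵢ bᵢ` all lie in that submonoid, and those exceeding `n`, if any, have a least
element, so they stay away from `n`.
-/

theorem SatisfiesDCC.isWF {S : Set ℝ} (hS : SatisfiesDCC S) : S.IsWF := by
  refine Set.isWF_iff_no_descending_seq.2 fun f hf hmem => ?_
  obtain ⟨N, hN⟩ := hS f hmem fun n => (hf n.lt_succ_self).le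
  exact (hf N.lt_succ_self).ne (hN (N + 1) N.le_succ)

theorem exists_gt_forall_mem_le_of_isWF {α : Type*} [LinearOrder α] [NoMaxOrder α] {S : Set α}
    (hS : S.IsWF) (a : α) : ∃ c > a, ∀ x ∈ S, a < x → c ≤ x := by
  obtain ⟨d, had⟩ := exists_gt a
  -- Adjoining `d` makes the set nonempty even when no element of `S` exceeds `a`.
  have hwf : (insert d (S ∩ Set.Ioi a)).IsWF := (hS.mono Set.inter_subset_left).insert d
  have hgt : insert d (S ∩ Set.Ioi a) ⊆ Set.Ioi a :=
    Set.insert_subset had Set.inter_subset_right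
  exact ⟨hwf.min (Set.insert_nonempty _ _), hgt (hwf.min_mem _),
    fun x hxS hax => hwf.min_le _ (Set.mem_insert_of_mem d ⟨hxS, hax⟩)⟩

theorem sum_nsmul_mem_addSubmonoid_closure {ι M : Type*} [AddCommMonoid M] {S : Set M}
    (s : Finset ι) {b : ι → M} (m : ι → ℕ) (hb : ∀ i ∈ s, b i ∈ S) :
    ∑ i ∈ s, m i • b i ∈ AddSubmonoid.closure S :=
  sum_mem fun i hi => nsmul_mem (AddSubmonoid.subset_closure (hb i hi)) (m i)

theorem stmt_0_general (Γ : Set ℝ) (hΓ : ∀ x ∈ Γ, 0 ≤ x) (hDCC : SatisfiesDCC Γ) (a : ℝ) :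
    ∃ γ : ℝ, 0 < γ ∧
      ∀ (k : ℕ) (b : Fin k → ℝ) (m : Fin k → ℕ),
        (∀ i, b i ∈ Γ) →
        (∑ i, (m i : ℝ) * b i) - a > 0 →
        (∑ i, (m i : ℝ) * b i) - a ≥ γ := by
  have hwf : (AddSubmonoid.closure Γ : Set ℝ).IsWF :=
    (hDCC.isWF.isPWO.addSubmonoid_closure hΓ).isWF
  obtain ⟨c, hac, hc⟩ := exists_gt_forall_mem_le_of_isWF hwf a
  refine ⟨c - a, sub_pos.2 hac, fun k b m hb hpos => ?_⟩
  have hmem : ∑ i, (m i : ℝ) * b i ∈ AddSubmonoid.closure Γ := by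
    simpa only [nsmul_eq_mul] using
      sum_nsmul_mem_addSubmonoid_closure Finset.univ m fun i _ => hb i
  exact sub_le_sub_right (hc _ hmem (sub_pos.1 hpos)) a

/-- Lemma 3.2: if `Γ ⊆ [0,1]` satisfies the DCC and `n` is a non-negative integer,
then there is `γ > 0` such that any finite non-negative integer combination
`∑ nᵢ bᵢ` of elements of `Γ` with `∑ nᵢ bᵢ - n > 0` satisfies `∑ nᵢ bᵢ - n ≥ γ`. -/
theorem stmt_0 (Γ : Set ℝ) (hΓ : Γ ⊆ Set.Icc 0 1) (hDCC : SatisfiesDCC Γ) (n : ℕ) :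
    ∃ γ : ℝ, 0 < γ ∧
      ∀ (k : ℕ) (b : Fin k → ℝ) (m : Fin k → ℕ),
        (∀ i, b i ∈ Γ) →
        (∑ i, (m i : ℝ) * b i) - n > 0 →
        (∑ i, (m i : ℝ) * b i) - n ≥ γ :=
  stmt_0_general Γ (fun _ hx => (hΓ hx).1) hDCC n
end

section
/- Let Γ ⊆ [0,1] be a set of real numbers satisfying the DCC. Then the set S := { ∑_{i=1}^k n_i·b_i : k ∈ ℕ, b₁, …, b_k ∈ Γ, n₁, …, n_k ∈ ℕ } of all finite non-negative integer combinations of elements of Γ also satisfies the DCC. -/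
/-!
Over a linear order the DCC, well-foundedness and partial well-ordering of a set coincide. By
Higman's lemma, partial well-ordering passes from a set of nonnegative elements to the additive
submonoid it generates, which contains every combination `∑ nᵢ bᵢ`.
-/

theorem exists_forall_ge_eq_of_antitone_of_isWF_range {α : Type*} [PartialOrder α] {f : ℕ → α}
    (hf : Antitone f) (hwf : (Set.range f).IsWF) : ∃ N, ∀ n ≥ N, f n = f N := by
  obtain ⟨N, hN⟩ := hwf.min_mem (Set.range_nonempty f)
  refine ⟨N, fun n hn => (hf hn).eq_of_not_lt ?_⟩
  rw [hN]
  exact hwf.not_lt_min _ (Set.mem_range_self n)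

theorem satisfiesDCC_iff_isPWO {S : Set ℝ} : SatisfiesDCC S ↔ S.IsPWO := by
  rw [Set.isPWO_iff_isWF]
  constructor
  · intro hS
    rw [Set.isWF_iff_no_descending_seq]
    intro f hf hfS
    obtain ⟨N, hN⟩ := hS f hfS fun n => (hf n.lt_succ_self).le
    exact (hf N.lt_succ_self).ne (hN (N + 1) N.le_succ)
  · intro hS f hfS hf
    exact exists_forall_ge_eq_of_antitone_of_isWF_range (antitone_nat_of_succ_le hf)
      (hS.mono (Set.range_subset_iff.2 hfS))

theorem SatisfiesDCC.mono {S T : Set ℝ} (hT : SatisfiesDCC T) (hST : S ⊆ T) : SatisfiesDCC S :=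
  fun f hf => hT f fun n => hST (hf n)

theorem SatisfiesDCC.addSubmonoid_closure {S : Set ℝ} (hS : SatisfiesDCC S)
    (hnonneg : ∀ x ∈ S, 0 ≤ x) : SatisfiesDCC (AddSubmonoid.closure S : Set ℝ) :=
  satisfiesDCC_iff_isPWO.2 ((satisfiesDCC_iff_isPWO.1 hS).addSubmonoid_closure hnonneg)

theorem sum_natCast_mul_mem_addSubmonoid_closure {ι R : Type*} [NonAssocSemiring R] {S : Set R}
    (t : Finset ι) (m : ι → ℕ) {b : ι → R} (hb : ∀ i ∈ t, b i ∈ S) :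
    ∑ i ∈ t, (m i : R) * b i ∈ AddSubmonoid.closure S := by
  refine sum_mem fun i hi => ?_
  rw [← nsmul_eq_mul]
  exact nsmul_mem (AddSubmonoid.subset_closure (hb i hi)) (m i)

theorem stmt_1_general (Γ : Set ℝ) (hΓ : Γ ⊆ Set.Ici 0) (hDCC : SatisfiesDCC Γ) :
    SatisfiesDCC {x : ℝ | ∃ (k : ℕ) (b : Fin k → ℝ) (m : Fin k → ℕ),
      (∀ i, b i ∈ Γ) ∧ x = ∑ i, (m i : ℝ) * b i} := by
  refine (hDCC.addSubmonoid_closure hΓ).mono ?_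
  rintro x ⟨k, b, m, hb, rfl⟩
  exact sum_natCast_mul_mem_addSubmonoid_closure Finset.univ m fun i _ => hb i

/-- If `Γ ⊆ [0,1]` satisfies the DCC, then the set of all finite non-negative
integer combinations of elements of `Γ` also satisfies the DCC. -/
theorem stmt_1 (Γ : Set ℝ) (hΓ : Γ ⊆ Set.Icc 0 1) (hDCC : SatisfiesDCC Γ) :
    SatisfiesDCC {x : ℝ | ∃ (k : ℕ) (b : Fin k → ℝ) (m : Fin k → ℕ),
      (∀ i, b i ∈ Γ) ∧ x = ∑ i, (m i : ℝ) * b i} :=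
  stmt_1_general Γ (hΓ.trans Set.Icc_subset_Ici_self) hDCC
end

section
/- Let γ ∈ (0,1] be a real number and Γ ⊆ [0,1] a set of real numbers such that Γ \ {0} ⊆ (γ, 1] and such that for every finite family b₁, …, b_k ∈ Γ and non-negative integers n₁, …, n_k, if ∑ n_i·b_i − 1 > 0 then ∑ n_i·b_i − 1 ≥ γ. Set ε := γ²/8. Then for every finite family b₁′, …, b_k′ of real numbers with each b_i′ ∈ [0,1] and each b_i′ ∈ [b_i − ε, b_i] for some b_i ∈ Γ, and every family of non-negative integers n₁, …, n_k, if ∑ n_i·b_i′ − 1 > 0 then ∑ n_i·b_i′ − 1 ≥ γ/2. -/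
/-!
A coefficient that is either `0` or at least `κ` loses at most the proportion `ε / κ` of its size
when it is lowered by at most `ε`. Hence a sum with nonnegative weights keeps at least the
proportion `1 - ε / κ` of its value. If the perturbed sum exceeds `1`, so does the original one,
which is then at least `1 + γ`; for `κ = γ` and `ε = γ² / 8` the perturbed sum is at least
`(1 - γ / 8) (1 + γ) = 1 + γ / 2 + γ (3 - γ) / 8`.
-/

lemma mul_sum_mul_le_sum_mul {ι R : Type*} [CommSemiring R] [PartialOrder R] [IsOrderedRing R]
    {s : Finset ι} {w x y : ι → R} {c : R}
    (hw : ∀ i ∈ s, 0 ≤ w i) (hxy : ∀ i ∈ s, c * x i ≤ y i) :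
    c * ∑ i ∈ s, w i * x i ≤ ∑ i ∈ s, w i * y i := by
  rw [Finset.mul_sum]
  refine Finset.sum_le_sum fun i hi => ?_
  rw [mul_left_comm]
  exact mul_le_mul_of_nonneg_left (hxy i hi) (hw i hi)

section Perturbation

variable {K : Type*} [Field K] [LinearOrder K] [IsStrictOrderedRing K] {κ ε : K}

lemma one_sub_div_mul_le_of_sub_le {x y : K} (hκ : 0 < κ) (hε : 0 ≤ ε)
    (hx : x = 0 ∨ κ ≤ x) (hy : 0 ≤ y) (hxy : x - ε ≤ y) : (1 - ε / κ) * x ≤ y := by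
  rcases hx with rfl | hx
  · simpa only [mul_zero] using hy
  · calc (1 - ε / κ) * x = x - ε * (x / κ) := by ring
      _ ≤ x - ε := sub_le_sub_left (le_mul_of_one_le_right hε ((one_le_div hκ).2 hx)) x
      _ ≤ y := hxy

lemma one_sub_div_mul_le_sum_of_gap {ι : Type*} {s : Finset ι} {w x y : ι → K} {t T : K}
    (hκ : 0 < κ) (hε : 0 ≤ ε) (hεκ : ε ≤ κ) (hw : ∀ i ∈ s, 0 ≤ w i)
    (hx : ∀ i ∈ s, x i = 0 ∨ κ ≤ x i) (hy : ∀ i ∈ s, 0 ≤ y i)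
    (hyx : ∀ i ∈ s, y i ∈ Set.Icc (x i - ε) (x i))
    (hgap : t < ∑ i ∈ s, w i * x i → T ≤ ∑ i ∈ s, w i * x i)
    (ht : t < ∑ i ∈ s, w i * y i) : (1 - ε / κ) * T ≤ ∑ i ∈ s, w i * y i := by
  have sum_le : ∑ i ∈ s, w i * y i ≤ ∑ i ∈ s, w i * x i :=
    Finset.sum_le_sum fun i hi => mul_le_mul_of_nonneg_left (hyx i hi).2 (hw i hi)
  have factor_nonneg : 0 ≤ 1 - ε / κ := sub_nonneg.2 ((div_le_one hκ).2 hεκ)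
  calc (1 - ε / κ) * T
      ≤ (1 - ε / κ) * ∑ i ∈ s, w i * x i :=
        mul_le_mul_of_nonneg_left (hgap (ht.trans_le sum_le)) factor_nonneg
    _ ≤ ∑ i ∈ s, w i * y i := mul_sum_mul_le_sum_mul hw fun i hi =>
        one_sub_div_mul_le_of_sub_le hκ hε (hx i hi) (hy i hi) (hyx i hi).1

end Perturbation

theorem stmt_4_general {γ : ℝ} (hγ : γ ∈ Set.Ioc (0 : ℝ) 3) {Γ : Set ℝ}
    (hΓ : Γ \ {0} ⊆ Set.Ici γ)
    (hgap : ∀ (k : ℕ) (b : Fin k → ℝ) (m : Fin k → ℕ),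
      (∀ i, b i ∈ Γ) →
      (∑ i, (m i : ℝ) * b i) - 1 > 0 →
      (∑ i, (m i : ℝ) * b i) - 1 ≥ γ)
    (k : ℕ) (b' : Fin k → ℝ) (m : Fin k → ℕ)
    (hb' : ∀ i, 0 ≤ b' i)
    (hclose : ∀ i, ∃ b ∈ Γ, b' i ∈ Set.Icc (b - γ ^ 2 / 8) b)
    (hpos : (∑ i, (m i : ℝ) * b' i) - 1 > 0) :
    (∑ i, (m i : ℝ) * b' i) - 1 ≥ γ / 2 := by
  obtain ⟨hγ0, hγ3⟩ := hγ
  choose b hbΓ hbb' using hclose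
  have eq_zero_or_le (i) : b i = 0 ∨ γ ≤ b i :=
    or_iff_not_imp_left.2 fun hi => hΓ ⟨hbΓ i, hi⟩
  have gap_b : 1 < ∑ i, (m i : ℝ) * b i → 1 + γ ≤ ∑ i, (m i : ℝ) * b i := fun h =>
    le_sub_iff_add_le'.1 (hgap k b m hbΓ (sub_pos.2 h))
  have shrunk_sum_le : (1 - γ ^ 2 / 8 / γ) * (1 + γ) ≤ ∑ i, (m i : ℝ) * b' i :=
    one_sub_div_mul_le_sum_of_gap hγ0 (by positivity) (by nlinarith)
      (fun i _ => Nat.cast_nonneg (m i)) (fun i _ => eq_zero_or_le i) (fun i _ => hb' i)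
      (fun i _ => hbb' i) gap_b (sub_pos.1 hpos)
  have remaining_gap : 1 + γ / 2 ≤ (1 - γ ^ 2 / 8 / γ) * (1 + γ) := by
    have ratio_eq : γ ^ 2 / 8 / γ = γ / 8 := by field_simp
    have excess_nonneg : 0 ≤ γ * (3 - γ) := mul_nonneg hγ0.le (sub_nonneg.2 hγ3)
    rw [ratio_eq]
    linarith
  exact le_sub_iff_add_le'.2 (remaining_gap.trans shrunk_sum_le)

/-- The quantitative claim inside the proof of Lemma 3.4: with `ε = γ²/8`,
integer combinations of perturbed coefficients exceeding `1` exceed it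
by at least `γ/2`. -/
theorem stmt_4 (γ : ℝ) (hγ : γ ∈ Set.Ioc (0 : ℝ) 1) (Γ : Set ℝ)
    (hΓ : Γ ⊆ Set.Icc 0 1)
    (hΓ0 : Γ \ {0} ⊆ Set.Ioc γ 1)
    (hgap : ∀ (k : ℕ) (b : Fin k → ℝ) (m : Fin k → ℕ),
      (∀ i, b i ∈ Γ) →
      (∑ i, (m i : ℝ) * b i) - 1 > 0 →
      (∑ i, (m i : ℝ) * b i) - 1 ≥ γ) :
    ∀ (k : ℕ) (b' : Fin k → ℝ) (m : Fin k → ℕ),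
      (∀ i, b' i ∈ Set.Icc (0 : ℝ) 1) →
      (∀ i, ∃ b ∈ Γ, b' i ∈ Set.Icc (b - γ ^ 2 / 8) b) →
      (∑ i, (m i : ℝ) * b' i) - 1 > 0 →
      (∑ i, (m i : ℝ) * b' i) - 1 ≥ γ / 2 := by
  intro k b' m hb' hclose hpos
  exact stmt_4_general ⟨hγ.1, by linarith [hγ.2]⟩ (fun b hb => (hΓ0 hb).1.le) hgap k b' m
    (fun i => (hb' i).1) hclose hpos
end

section
/- Let n ≥ 1 be an integer and let a : ℕ → ℝ be a sequence such that a(1) ≤ 2 and, for every integer k with 1 ≤ k ≤ n − 1, either a(k+1) ≤ a(k) + 1, or there exists an integer j with 1 ≤ j ≤ k − 1 such that a(k+1) ≤ a(k) + a(j) − 1. Then a(n) ≤ Fib(n+1) + 1, and in particular a(n) ≤ 2^n. Here Fib denotes the Fibonacci sequence normalized by Fib(1) = Fib(2) = 1 and Fib(m+2) = Fib(m+1) + Fib(m). -/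
/-!
Subtract `1`: the sequence `b k = a k - 1`, extended by `b 0 = 1`, satisfies `b 0 ≤ 1`, `b 1 ≤ 1`
and `b (k + 1) ≤ b k + b j` for some `j < k`, the first alternative of the recursion being the case
`j = 0`. The Fibonacci sequence is extremal for this because `fib (j + 1) ≤ fib k` when `j < k`.
-/

theorem fib_succ_add_one_le_two_pow {n : ℕ} (hn : 1 ≤ n) : Nat.fib (n + 1) + 1 ≤ 2 ^ n := by
  induction n, hn using Nat.le_induction with
  | base => simp
  | succ k _ ih =>
    have hmono : Nat.fib k ≤ Nat.fib (k + 1) := Nat.fib_le_fib_succ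
    calc Nat.fib (k + 2) + 1
        = Nat.fib k + Nat.fib (k + 1) + 1 := by rw [Nat.fib_add_two]
      _ ≤ 2 * (Nat.fib (k + 1) + 1) := by lia
      _ ≤ 2 * 2 ^ k := by gcongr
      _ = 2 ^ (k + 1) := (pow_succ' 2 k).symm

theorem le_fib_succ_nsmul_of_le_add {M : Type*} [AddMonoid M] [Preorder M] [AddLeftMono M]
    [AddRightMono M] {n : ℕ} {b : ℕ → M} {c : M} (hc : 0 ≤ c) (h0 : b 0 ≤ c) (h1 : b 1 ≤ c)
    (hstep : ∀ k, k + 2 ≤ n → ∃ j ≤ k, b (k + 2) ≤ b (k + 1) + b j) :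
    b n ≤ Nat.fib (n + 1) • c := by
  induction n using Nat.strong_induction_on with
  | _ n ih =>
    match n with
    | 0 => simpa using h0
    | 1 => simpa using h1
    | k + 2 =>
      have bound (m : ℕ) (hm : m < k + 2) : b m ≤ Nat.fib (m + 1) • c :=
        ih m hm fun i hi ↦ hstep i (hi.trans hm.le)
      obtain ⟨j, hjk, hj⟩ := hstep k le_rfl
      calc b (k + 2)
          ≤ b (k + 1) + b j := hj
        _ ≤ Nat.fib (k + 2) • c + Nat.fib (j + 1) • c :=
          add_le_add (bound (k + 1) (by lia)) (bound j (by lia))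
        _ ≤ Nat.fib (k + 2) • c + Nat.fib (k + 1) • c := by
          gcongr
        _ = Nat.fib (k + 3) • c := by rw [← add_nsmul, add_comm, ← Nat.fib_add_two]

theorem stmt_6_general {R : Type*} [Ring R] [PartialOrder R] [IsOrderedRing R] {n : ℕ}
    (hn : 1 ≤ n) {a : ℕ → R} (h1 : a 1 ≤ 2)
    (hstep : ∀ k : ℕ, 1 ≤ k → k ≤ n - 1 →
      a (k + 1) ≤ a k + 1 ∨ ∃ j : ℕ, 1 ≤ j ∧ j ≤ k - 1 ∧ a (k + 1) ≤ a k + a j - 1) :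
    a n ≤ (Nat.fib (n + 1) : R) + 1 ∧ a n ≤ 2 ^ n := by
  let b : ℕ → R := Function.update (fun k ↦ a k - 1) 0 1
  have b_zero : b 0 = 1 := Function.update_self ..
  have b_of_pos {k : ℕ} (hk : 1 ≤ k) : b k = a k - 1 :=
    Function.update_of_ne (Nat.one_le_iff_ne_zero.mp hk) ..
  have b_one_le : b 1 ≤ 1 := by
    rw [b_of_pos le_rfl, sub_le_iff_le_add, one_add_one_eq_two]
    exact h1
  have b_step (k : ℕ) (hk : k + 2 ≤ n) : ∃ j ≤ k, b (k + 2) ≤ b (k + 1) + b j := by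
    rcases hstep (k + 1) (by lia) (by lia) with h | ⟨j, hj, hjk, h⟩
    · refine ⟨0, k.zero_le, ?_⟩
      rw [b_zero, b_of_pos (by lia), b_of_pos (by lia), sub_add_cancel, sub_le_iff_le_add]
      exact h
    · refine ⟨j, hjk, ?_⟩
      rw [b_of_pos (by lia), b_of_pos (by lia), b_of_pos hj, sub_le_iff_le_add]
      convert h using 1
      abel
  have hfib : a n ≤ (Nat.fib (n + 1) : R) + 1 := by
    rw [← sub_le_iff_le_add, ← b_of_pos hn, ← nsmul_one]
    exact le_fib_succ_nsmul_of_le_add zero_le_one b_zero.le b_one_le b_step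
  have hpow : (Nat.fib (n + 1) : R) + 1 ≤ 2 ^ n := by
    exact_mod_cast Nat.mono_cast (α := R) (fib_succ_add_one_le_two_pow hn)
  exact ⟨hfib, hfib.trans hpow⟩

/-- The arithmetic core of Lemma 3.14: if `a 1 ≤ 2` and each later term grows
by at most `1` or by at most `a j - 1` for some earlier index `j`, then
`a n ≤ Fib (n+1) + 1 ≤ 2 ^ n`. Here `Nat.fib` satisfies
`Nat.fib 1 = Nat.fib 2 = 1` and the Fibonacci recursion. -/
theorem stmt_6 (n : ℕ) (hn : 1 ≤ n) (a : ℕ → ℝ) (h1 : a 1 ≤ 2)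
    (hstep : ∀ k : ℕ, 1 ≤ k → k ≤ n - 1 →
      a (k + 1) ≤ a k + 1 ∨ ∃ j : ℕ, 1 ≤ j ∧ j ≤ k - 1 ∧ a (k + 1) ≤ a k + a j - 1) :
    a n ≤ (Nat.fib (n + 1) : ℝ) + 1 ∧ a n ≤ 2 ^ n :=
  stmt_6_general hn h1 hstep
end
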